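/- arXiv:2102.12794 — 4 statements merged into one kernel-verified Lean document; each statement's English description precedes it below -/
import Mathlib

section
/- Let d ≥ 2 and 1 ≤ ω ≤ d be integers, let V be a set, and let c be a 2-coloring of the complete digraph on V such that c(v,v) = red for all v ∈ V and V contains no blue clique of size ω + 1. Then V can be covered by at most ∑_{i=1}^{ω} d^i red d-dominating sets. -/
/-- The two colors for 2-colorings of complete digraphs. -/
inductive Color where
  | red : Color
  | blue : Color

/-- `U'` is a red `d`-dominating set: every finite `S ⊆ U'` with `1 ≤ |S| ≤ d` has a
common red out-neighbor inside `U'`. -/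
def IsRedDom {V : Type*} (c : V → V → Color) (d : ℕ) (U' : Set V) : Prop :=
  ∀ S : Finset V, ↑S ⊆ U' → S.Nonempty → S.card ≤ d →
    ∃ w ∈ U', ∀ s ∈ S, c s w = Color.red

/-- `A` has a blue clique of size `k`: `k` vertices of `A` pairwise joined by blue
edges in both directions. -/
def HasBlueClique {V : Type*} (c : V → V → Color) (k : ℕ) (A : Set V) : Prop :=
  ∃ X : Finset V, ↑X ⊆ A ∧ X.card = k ∧
    ∀ u ∈ X, ∀ v ∈ X, u ≠ v → c u v = Color.blue ∧ c v u = Color.blue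

/-!
Induct on `ω`, working inside an arbitrary set `A` of vertices. If `A` is not itself red
`d`-dominating, then some `S ⊆ A` with at most `d` elements has no common red out-neighbor in `A`,
so every `w ∈ A` receives a blue edge from some `s ∈ S`. Either `w` sends a red edge back to this
`s`, or `w` is joined to `s` by blue edges in both directions. The first kind of vertices form a
red dominating set, because the red loop at `s` puts the common out-neighbor `s` inside it; the
second kind contain no blue clique of size `ω`, since `s` would extend it. The number `f(ω)` of
sets needed thus satisfies `f(ω) ≤ d (1 + f(ω - 1))`, which unfolds to the geometric sum.
-/

open Finset

theorem sum_Icc_one_pow_succ {R : Type*} [Semiring R] (x : R) (n : ℕ) :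
    ∑ i ∈ Icc 1 (n + 1), x ^ i = x * (1 + ∑ i ∈ Icc 1 n, x ^ i) := by
  induction n with
  | zero => simp
  | succ n ih =>
    rw [sum_Icc_succ_top (by lia), ih, pow_succ' x (n + 1), ← mul_add, add_assoc,
      ← sum_Icc_succ_top (by lia), ih]

theorem Color.ne_red {a : Color} : a ≠ red ↔ a = blue := by
  cases a <;> simp

section Coloring

variable {V : Type*} {c : V → V → Color} {d k l : ℕ} {A B : Set V} {s : V}

/-- The red in-neighborhood of the vertex `s` in the set `A`; it contains `s` itself when `s ∈ A`
has a red loop. -/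
def redInNeighbors (c : V → V → Color) (A : Set V) (s : V) : Set V :=
  {w ∈ A | c w s = Color.red}

/-- The blue neighborhood of `s` in `A` in the sense of blue cliques: the vertices of `A` joined
to `s` by blue edges in both directions. -/
def blueNeighbors (c : V → V → Color) (A : Set V) (s : V) : Set V :=
  {w ∈ A | c s w = Color.blue ∧ c w s = Color.blue}

theorem isRedDom_redInNeighbors (hs : s ∈ A) (hloop : c s s = Color.red) :
    IsRedDom c d (redInNeighbors c A s) :=
  fun _ hT _ _ ↦ ⟨s, ⟨hs, hloop⟩, fun _ ht ↦ (hT ht).2⟩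

theorem hasBlueClique_one : HasBlueClique c 1 A ↔ A.Nonempty := by
  simp only [HasBlueClique, card_eq_one]
  constructor
  · rintro ⟨_, hXA, ⟨a, rfl⟩, -⟩
    exact ⟨a, hXA (by simp)⟩
  · rintro ⟨a, ha⟩
    exact ⟨{a}, by simpa using ha, ⟨a, rfl⟩, by simp⟩

open scoped Classical in
theorem HasBlueClique.succ_of_blueNeighbors (hs : s ∈ A) (hloop : c s s = Color.red)
    (h : HasBlueClique c k (blueNeighbors c A s)) : HasBlueClique c (k + 1) A := by
  obtain ⟨X, hXN, rfl, hX⟩ := h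
  have hsX : s ∉ X := fun hsX ↦ by simpa [hloop] using (hXN hsX).2.1
  refine ⟨insert s X, ?_, card_insert_of_notMem hsX, fun u hu v hv huv ↦ ?_⟩
  · rw [coe_insert]
    exact Set.insert_subset hs fun x hx ↦ (hXN hx).1
  · obtain rfl | huX := mem_insert.1 hu <;> obtain rfl | hvX := mem_insert.1 hv
    · exact absurd rfl huv
    · exact (hXN hvX).2
    · exact (hXN huX).2.symm
    · exact hX u huX v hvX huv

theorem exists_blue_dominating_of_not_isRedDom (h : ¬ IsRedDom c d A) :
    ∃ S : Finset V, ↑S ⊆ A ∧ #S ≤ d ∧ ∀ w ∈ A, ∃ s ∈ S, c s w = Color.blue := by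
  simp only [IsRedDom] at h
  push Not at h
  obtain ⟨S, hSA, -, hSd, hS⟩ := h
  exact ⟨S, hSA, hSd, by simpa only [Color.ne_red] using hS⟩

theorem biUnion_redInNeighbors_union_blueNeighbors {S : Finset V}
    (hS : ∀ w ∈ A, ∃ s ∈ S, c s w = Color.blue) :
    ⋃ s ∈ S, (redInNeighbors c A s ∪ blueNeighbors c A s) = A := by
  refine (Set.iUnion₂_subset fun s _ ↦ Set.union_subset (Set.sep_subset _ _)
    (Set.sep_subset _ _)).antisymm fun w hw ↦ ?_
  obtain ⟨s, hs, hsw⟩ := hS w hw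
  refine Set.mem_biUnion hs ?_
  by_cases hws : c w s = Color.red
  · exact .inl ⟨hw, hws⟩
  · exact .inr ⟨hw, hsw, Color.ne_red.1 hws⟩

/-- `A` has a cover by at most `k` red `d`-dominating sets. The members of the cover are required
to lie inside `A`, so that their union is `A`. -/
def RedDomCoverable (c : V → V → Color) (d k : ℕ) (A : Set V) : Prop :=
  ∃ F : Finset (Set V), #F ≤ k ∧ ⋃₀ ↑F = A ∧ ∀ W ∈ F, IsRedDom c d W

namespace RedDomCoverable

theorem empty : RedDomCoverable c d 0 ∅ :=
  ⟨∅, by simp⟩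

theorem of_isRedDom (h : IsRedDom c d A) : RedDomCoverable c d 1 A :=
  ⟨{A}, by simpa using h⟩

theorem mono (hkl : k ≤ l) (h : RedDomCoverable c d k A) : RedDomCoverable c d l A :=
  h.imp fun _ ↦ And.imp_left (le_trans · hkl)

open scoped Classical in
theorem union (hA : RedDomCoverable c d k A) (hB : RedDomCoverable c d l B) :
    RedDomCoverable c d (k + l) (A ∪ B) := by
  obtain ⟨F, hFk, rfl, hF⟩ := hA
  obtain ⟨G, hGl, rfl, hG⟩ := hB
  refine ⟨F ∪ G, (card_union_le F G).trans (add_le_add hFk hGl), ?_, fun W hW ↦ ?_⟩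
  · rw [coe_union, Set.sUnion_union]
  · exact (mem_union.1 hW).elim (hF W) (hG W)

open scoped Classical in
theorem biUnion {ι : Type*} {S : Finset ι} {A : ι → Set V}
    (h : ∀ i ∈ S, RedDomCoverable c d k (A i)) :
    RedDomCoverable c d (#S * k) (⋃ i ∈ S, A i) := by
  induction S using Finset.induction_on with
  | empty => simpa using empty
  | insert i S hi ih =>
    rw [card_insert_of_notMem hi, add_one_mul, add_comm, set_biUnion_insert]
    exact (h i (mem_insert_self i S)).union (ih fun j hj ↦ h j (mem_insert_of_mem hj))

theorem exists_fin (h : RedDomCoverable c d k A) :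
    ∃ n ≤ k, ∃ W : Fin n → Set V, ⋃ i, W i = A ∧ ∀ i, IsRedDom c d (W i) := by
  obtain ⟨F, hFk, rfl, hF⟩ := h
  refine ⟨#F, hFk, fun i ↦ F.equivFin.symm i, ?_, fun i ↦ hF _ (F.equivFin.symm i).2⟩
  rw [Set.sUnion_eq_iUnion]
  exact F.equivFin.symm.surjective.iUnion_comp fun W ↦ (W : Set V)

theorem of_forall_blueNeighbors (hd : 0 < d) (hloop : ∀ v ∈ A, c v v = Color.red)
    (h : ∀ s ∈ A, RedDomCoverable c d k (blueNeighbors c A s)) :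
    RedDomCoverable c d (d * (1 + k)) A := by
  by_cases hA : IsRedDom c d A
  · exact (of_isRedDom hA).mono (Nat.mul_pos hd (by lia))
  · obtain ⟨S, hSA, hSd, hS⟩ := exists_blue_dominating_of_not_isRedDom hA
    rw [← biUnion_redInNeighbors_union_blueNeighbors hS]
    refine (biUnion fun s hs ↦ ?_).mono (Nat.mul_le_mul_right (1 + k) hSd)
    have hsA : s ∈ A := hSA hs
    exact (of_isRedDom (isRedDom_redInNeighbors hsA (hloop s hsA))).union (h s hsA)

theorem of_not_hasBlueClique (hd : 0 < d) {ω : ℕ} (hloop : ∀ v ∈ A, c v v = Color.red)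
    (hA : ¬ HasBlueClique c (ω + 1) A) : RedDomCoverable c d (∑ i ∈ Icc 1 ω, d ^ i) A := by
  induction ω generalizing A with
  | zero =>
    obtain rfl : A = ∅ := by simpa [hasBlueClique_one, Set.not_nonempty_iff_eq_empty] using hA
    simpa using empty
  | succ ω ih =>
    rw [sum_Icc_one_pow_succ]
    refine of_forall_blueNeighbors hd hloop fun s hs ↦ ih (fun v hv ↦ hloop v hv.1) ?_
    exact fun hN ↦ hA (hN.succ_of_blueNeighbors hs (hloop s hs))

end RedDomCoverable

end Coloring

theorem cover_by_sum_red_dominating_general {V : Type*} {d ω : ℕ} (hd : 0 < d)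
    {c : V → V → Color} {A : Set V} (hloop : ∀ v ∈ A, c v v = Color.red)
    (hA : ¬ HasBlueClique c (ω + 1) A) :
    ∃ n ≤ ∑ i ∈ Icc 1 ω, d ^ i, ∃ W : Fin n → Set V,
      (⋃ i, W i) = A ∧ ∀ i, IsRedDom c d (W i) :=
  (RedDomCoverable.of_not_hasBlueClique hd hloop hA).exists_fin

/-- Lemma (f(ω,d) ≤ ∑_{i=1}^{ω} d^i): if all loops are red and `V` has no blue clique
of size `ω+1`, then `V` can be covered by at most `∑_{i=1}^{ω} d^i` red
`d`-dominating sets. -/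
theorem cover_by_sum_red_dominating {V : Type*} (d ω : ℕ) (hd : 2 ≤ d)
    (hω₁ : 1 ≤ ω) (hωd : ω ≤ d)
    (c : V → V → Color)
    (hloop : ∀ v : V, c v v = Color.red)
    (hV : ¬ HasBlueClique c (ω + 1) (Set.univ : Set V)) :
    ∃ n : ℕ, n ≤ ∑ i ∈ Finset.Icc 1 ω, d ^ i ∧ ∃ W : Fin n → Set V,
      (⋃ i, W i) = Set.univ ∧ ∀ i, IsRedDom c d (W i) :=
  cover_by_sum_red_dominating_general (by lia) (fun v _ ↦ hloop v) hV
end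

section
/- For every integer d ≥ 3 there exists a finite set V and a 2-coloring c of the complete digraph on V such that c(v,v) = red for all v ∈ V, there are no two distinct vertices u,v ∈ V with c(u,v) = c(v,u) = blue, and V cannot be covered by fewer than d monochromatic d-dominating subgraphs. (Together with the matching upper bound, this shows f(1,d) = d for all d ≥ 3.) -/
/-- `U`, together with the color `j`, is the vertex set of a monochromatic
`d`-dominating subgraph of the complete digraph 2-colored by `c`. -/
def IsMonoDom {V : Type*} (c : V → V → Color) (d : ℕ) (j : Color) (U : Set V) : Prop :=
  ∀ S : Finset V, ↑S ⊆ U → S.Nonempty → S.card ≤ d →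
    ∃ w ∈ U, ∀ s ∈ S, c s w = j

/-!
Color a tournament `r` on `V` by making its arcs blue and all other pairs, in particular the
reversed arcs and the loops, red. Take `r` such that any `d - 1` vertices have a common
`r`-predecessor, and such that neither `r` nor its reverse has this property on a proper subset
of `V`.

A nonempty blue `d`-dominating set has this property for the reverse of `r`, and keeps it when any
vertex is removed, against minimality. A red `d`-dominating set `U` has a vertex `w` of `V` without
`r`-predecessor in `U`: otherwise `U` would inherit the property and thus be all of `V`. But `V` is
not red `d`-dominating: by minimality some set `X` of at most `d - 1` vertices has a single common
predecessor `v`. Besides `v`, only one vertex, in `X`, can dominate `X` in red; adding to `X` a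
common predecessor of these two vertices yields a set that nothing dominates in red.

So each set of a cover comes with a vertex that has no predecessor in it, and with at most `d - 1`
sets a common predecessor of these vertices would be left uncovered.
-/

open Function Set

/-- Tournaments, given by their arc relation: any two distinct vertices are joined by exactly one
arc, and there are no loops. -/
class IsTournament_s11 {V : Type*} (r : V → V → Prop) : Prop
    extends Std.Asymm r, Std.Trichotomous r

instance {V : Type*} (r : V → V → Prop) [IsTournament_s11 r] : IsTournament_s11 (swap r) where

theorem IsTournament_s11.onFun {V W : Type*} (r : V → V → Prop) [IsTournament_s11 r] {f : W → V}
    (hf : Injective f) : IsTournament_s11 (r on f) where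
  trichotomous := (hf.trichotomous_onFun r).trichotomous

/-- Any at most `k` elements of `U` have a common `r`-predecessor in `U`. A tournament with this
property on its whole vertex set is usually called `k`-paradoxical (Schütte's property `S_k`).
The empty set is not excluded, so `U` is nonempty. -/
def IsDominatingOn {V : Type*} (r : V → V → Prop) (k : ℕ) (U : Set V) : Prop :=
  ∀ X : Finset V, ↑X ⊆ U → X.card ≤ k → ∃ w ∈ U, ∀ x ∈ X, r w x

/-- The domination property of `U` for `r`, together with minimality of `U` among the sets that have
this property for `r` or for the reverse of `r`. -/
structure IsMinimalDominatingOn {V : Type*} (r : V → V → Prop) (k : ℕ) (U : Set V) : Prop where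
  isDominatingOn : IsDominatingOn r k U
  minimal : Minimal (fun T => IsDominatingOn r k T ∨ IsDominatingOn (swap r) k T) U

section Domination

variable {V : Type*} {r : V → V → Prop} {k : ℕ} {U : Set V}

theorem IsDominatingOn.nonempty (h : IsDominatingOn r k U) : U.Nonempty :=
  let ⟨w, hw, _⟩ := h ∅ (by simp) (by simp)
  ⟨w, hw⟩

theorem IsDominatingOn.mono_rel {s : V → V → Prop} (hrs : r ≤ s) (h : IsDominatingOn r k U) :
    IsDominatingOn s k U := fun X hXU hX =>
  let ⟨w, hwU, hw⟩ := h X hXU hX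
  ⟨w, hwU, fun x hx => hrs w x (hw x hx)⟩

theorem isDominatingOn_image_iff {W : Type*} {f : W → V} {U : Set W} :
    IsDominatingOn r k (f '' U) ↔ IsDominatingOn (r on f) k U := by
  classical
  constructor
  · intro h X hXU hX
    obtain ⟨_, ⟨w, hwU, rfl⟩, hw⟩ :=
      h (X.image f) (by simpa using hXU.trans (subset_preimage_image f U))
        (Finset.card_image_le.trans hX)
    exact ⟨w, hwU, fun x hx => hw (f x) (Finset.mem_image_of_mem f hx)⟩
  · intro h X hXU hX
    obtain ⟨Y, hYU, hf, rfl⟩ := Finset.exists_subset_injOn_image_eq_of_surjOn U X hXU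
    obtain ⟨w, hwU, hw⟩ := h Y hYU (Finset.card_image_of_injOn hf ▸ hX)
    exact ⟨f w, mem_image_of_mem f hwU, Finset.forall_mem_image.2 hw⟩

theorem IsMinimalDominatingOn.onFun {W : Type*} {f : W → V} (hf : Injective f) {U : Set W}
    (h : IsMinimalDominatingOn r k (f '' U)) : IsMinimalDominatingOn (r on f) k U where
  isDominatingOn := isDominatingOn_image_iff.1 h.isDominatingOn
  minimal := ⟨Or.inl (isDominatingOn_image_iff.1 h.isDominatingOn), fun _ hT hTU =>
    (image_subset_image_iff hf).1 <| h.minimal.le_of_le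
      (hT.imp isDominatingOn_image_iff.2 isDominatingOn_image_iff.2) (image_mono hTU)⟩

theorem IsDominatingOn.exists_rel_insert (h : IsDominatingOn r (k + 1) U) {X : Finset V}
    (hXU : ↑X ⊆ U) (hX : X.card ≤ k) {y : V} (hy : y ∈ U) :
    ∃ w ∈ U, r w y ∧ ∀ x ∈ X, r w x := by
  classical
  obtain ⟨w, hwU, hw⟩ := h (insert y X) (by simpa [insert_subset_iff] using ⟨hy, hXU⟩)
    ((Finset.card_insert_le y X).trans (by lia))
  exact ⟨w, hwU, by simpa using hw⟩

theorem IsDominatingOn.sdiff_singleton [Std.Irrefl r] (h : IsDominatingOn r (k + 1) U) {v : V}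
    (hv : v ∈ U) : IsDominatingOn r k (U \ {v}) := by
  intro X hXU hX
  obtain ⟨w, hwU, hwv, hwX⟩ := h.exists_rel_insert (hXU.trans sdiff_subset) hX hv
  exact ⟨w, ⟨hwU, ne_of_irrefl hwv⟩, hwX⟩

theorem IsDominatingOn.lt_card_of_iUnion_eq_univ {ι : Type*} [Fintype ι] {U : ι → Set V}
    (h : IsDominatingOn r k univ) (hcov : ⋃ i, U i = univ)
    (hU : ∀ i, ∃ w, ∀ u ∈ U i, ¬ r u w) : k < Fintype.card ι := by
  classical
  choose w hw using hU
  by_contra! hk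
  obtain ⟨z, -, hz⟩ := h (Finset.univ.image w) (subset_univ _) (Finset.card_image_le.trans hk)
  obtain ⟨i, hi⟩ := iUnion_eq_univ_iff.1 hcov z
  exact hw i z hi (hz (w i) (Finset.mem_image_of_mem w (Finset.mem_univ i)))

theorem exists_finset_forall_rel_imp_eq (hmin : Minimal (IsDominatingOn r k) univ) (v : V) :
    ∃ X : Finset V, X.card ≤ k ∧ ∀ w, (∀ x ∈ X, r w x) → w = v := by
  by_contra! h
  have hv : IsDominatingOn r k {v}ᶜ := fun X _ hX =>
    let ⟨w, hw, hwv⟩ := h X hX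
    ⟨w, hwv, hw⟩
  exact hmin.le_of_le hv (subset_univ _) (mem_univ v) rfl

end Domination

section WeakDomination

variable {V : Type*} {r : V → V → Prop} [Std.Trichotomous r] {k : ℕ} {U : Set V}

-- Trichotomy makes a vertex of `X` without predecessor in `X` unique; it serves as `w₀`.
theorem exists_forall_eq_or_forall_rel [Nonempty V] (X : Set V) :
    ∃ w₀, ∀ w, (∀ x ∈ X, ¬ r x w) → w = w₀ ∨ ∀ x ∈ X, r w x := by
  have mem_of_not_forall {w : V} (hw : ∀ x ∈ X, ¬ r x w) (hwX : ¬ ∀ x ∈ X, r w x) : w ∈ X := by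
    push Not at hwX
    obtain ⟨x, hx, hwx⟩ := hwX
    rwa [Std.Trichotomous.trichotomous w x hwx (hw x hx)]
  by_cases h : ∃ w₀ ∈ X, ∀ x ∈ X, ¬ r x w₀
  · obtain ⟨w₀, hw₀X, hw₀⟩ := h
    refine ⟨w₀, fun w hw => or_iff_not_imp_right.2 fun hwX => ?_⟩
    exact Std.Trichotomous.trichotomous w w₀ (hw₀ w (mem_of_not_forall hw hwX)) (hw w₀ hw₀X)
  · refine ⟨Classical.arbitrary V, fun w hw => Or.inr ?_⟩
    by_contra hwX
    exact h ⟨w, mem_of_not_forall hw hwX, hw⟩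

theorem IsDominatingOn.isDominatingOn_or_exists_forall_not_rel
    (h : IsDominatingOn (fun w s => ¬ r s w) (k + 1) U) :
    IsDominatingOn r k U ∨ ∃ w, ∀ u ∈ U, ¬ r u w := by
  have : Nonempty V := h.nonempty.to_type
  refine or_iff_not_imp_left.2 fun hU => ?_
  simp only [IsDominatingOn, not_forall] at hU
  obtain ⟨X, hXU, hX, hno⟩ := hU
  obtain ⟨w₀, hw₀⟩ := exists_forall_eq_or_forall_rel (r := r) (X : Set V)
  refine ⟨w₀, fun u hu => ?_⟩
  obtain ⟨w, hwU, hwu, hwX⟩ := h.exists_rel_insert hXU hX hu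
  obtain rfl | hw := hw₀ w hwX
  · exact hwu
  · exact absurd ⟨w, hwU, hw⟩ hno

theorem not_isDominatingOn_univ_of_minimal (hk : 2 ≤ k)
    (hmin : Minimal (IsDominatingOn r k) univ) :
    ¬ IsDominatingOn (fun w s => ¬ r s w) (k + 1) univ := by
  classical
  intro h
  have : Nonempty V := h.nonempty.to_type
  let v : V := Classical.arbitrary V
  obtain ⟨X, hX, hXv⟩ := exists_finset_forall_rel_imp_eq hmin v
  obtain ⟨w₀, hw₀⟩ := exists_forall_eq_or_forall_rel (r := r) (X : Set V)
  obtain ⟨y, -, hy⟩ := hmin.prop {v, w₀} (subset_univ _) (Finset.card_le_two.trans hk)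
  obtain ⟨w, -, hwy, hwX⟩ := h.exists_rel_insert (subset_univ _) hX (mem_univ y)
  obtain rfl | hw := hw₀ w hwX
  · exact hwy (hy w (by simp))
  · exact hwy (hXv w hw ▸ hy v (by simp))

theorem exists_forall_not_rel_of_minimal (hk : 2 ≤ k)
    (hmin : Minimal (IsDominatingOn r k) univ)
    (hU : IsDominatingOn (fun w s => ¬ r s w) (k + 1) U) : ∃ w, ∀ u ∈ U, ¬ r u w := by
  refine hU.isDominatingOn_or_exists_forall_not_rel.resolve_left fun h => ?_
  obtain rfl : U = univ := hmin.eq_of_le h (subset_univ U)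
  exact not_isDominatingOn_univ_of_minimal hk hmin hU

end WeakDomination

section Existence

theorem exists_isTournament_ge {V : Type*} (R : V → V → Prop) [Std.Asymm R] :
    ∃ r, R ≤ r ∧ IsTournament_s11 r := by
  refine ⟨fun u v => R u v ∨ ¬ R v u ∧ WellOrderingRel u v, fun u v => Or.inl, ?_⟩
  have hR := Std.Asymm.asymm (r := R)
  have hlt := Std.Asymm.asymm (r := WellOrderingRel (α := V))
  have htri := Std.Trichotomous.trichotomous (r := WellOrderingRel (α := V))
  exact { asymm := by grind, trichotomous := by grind }

/-- The relation on pairs `(a, s)` in which `(a, s)` precedes `(b, t)` when `b ∈ s` and not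
`a ∈ t`. It is asymmetric, and `(a, s)` precedes every pair whose first coordinate is in `s` as long
as `a` avoids the second coordinates. -/
def OneSidedMem {α : Type*} (u v : α × Finset α) : Prop :=
  v.1 ∈ u.2 ∧ u.1 ∉ v.2

instance {α : Type*} : Std.Asymm (OneSidedMem (α := α)) :=
  ⟨fun _ _ h h' => h.2 h'.1⟩

theorem isDominatingOn_oneSidedMem {α : Type*} [Fintype α] {k : ℕ} (hα : k * k < Fintype.card α) :
    IsDominatingOn (OneSidedMem (α := α)) k {v | v.2.card ≤ k} := by
  classical
  intro X hXk hX
  have hcard : (X.biUnion Prod.snd).card < Fintype.card α :=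
    (Finset.card_biUnion_le_card_mul X _ k hXk).trans_lt ((Nat.mul_le_mul_right k hX).trans_lt hα)
  obtain ⟨a, -, ha⟩ := Finset.exists_mem_notMem_of_card_lt_card hcard
  exact ⟨(a, X.image Prod.fst), Finset.card_image_le.trans hX, fun x hx =>
    ⟨Finset.mem_image_of_mem _ hx, fun hax => ha (Finset.mem_biUnion.2 ⟨x, hx, hax⟩)⟩⟩

theorem exists_isTournament_isDominatingOn (k : ℕ) :
    ∃ (V : Type) (_ : Finite V) (r : V → V → Prop) (U : Set V),
      IsTournament_s11 r ∧ IsDominatingOn r k U := by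
  let α := Fin (k * k + 1)
  obtain ⟨r, hr, hT⟩ := exists_isTournament_ge (OneSidedMem (α := α))
  have hdom := isDominatingOn_oneSidedMem (α := α) (k := k) (by simp [α])
  exact ⟨α × Finset α, inferInstance, r, _, hT, hdom.mono_rel hr⟩

theorem exists_isTournament_isMinimalDominatingOn_univ (k : ℕ) :
    ∃ (V : Type) (_ : Fintype V) (r : V → V → Prop),
      IsTournament_s11 r ∧ IsMinimalDominatingOn r k univ := by
  obtain ⟨V, _, r, U, _, hU⟩ := exists_isTournament_isDominatingOn k
  obtain ⟨W, hW⟩ := exists_minimal_of_wellFoundedLT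
    (fun T => IsDominatingOn r k T ∨ IsDominatingOn (swap r) k T) ⟨U, Or.inl hU⟩
  obtain ⟨s, _, hs⟩ : ∃ s, IsTournament_s11 s ∧ IsMinimalDominatingOn s k W := by
    obtain h | h := hW.prop
    · exact ⟨r, ‹_›, h, hW⟩
    · exact ⟨swap r, inferInstance, h, hW.mono (fun _ => Or.symm) hW.prop.symm⟩
  rw [← Subtype.coe_image_univ W] at hs
  exact ⟨W, Fintype.ofFinite W, s on Subtype.val, .onFun s Subtype.val_injective,
    hs.onFun Subtype.val_injective⟩

end Existence

section Coloring

variable {V : Type*}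

open Classical in
/-- The coloring whose blue edges are the pairs related by `r`. -/
noncomputable def coloringOfRel (r : V → V → Prop) (u v : V) : Color :=
  if r u v then Color.blue else Color.red

theorem coloringOfRel_eq_blue_iff {r : V → V → Prop} {u v : V} :
    coloringOfRel r u v = Color.blue ↔ r u v := by
  simp [coloringOfRel]

theorem coloringOfRel_eq_red_iff {r : V → V → Prop} {u v : V} :
    coloringOfRel r u v = Color.red ↔ ¬ r u v := by
  simp [coloringOfRel]

theorem IsMonoDom.isDominatingOn {c : V → V → Color} {d : ℕ} {j : Color} {U : Set V}
    (h : IsMonoDom c d j U) (hU : U.Nonempty) : IsDominatingOn (fun w s => c s w = j) d U := by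
  intro X hXU hX
  obtain rfl | hne := X.eq_empty_or_nonempty
  · exact ⟨hU.some, hU.some_mem, by simp⟩
  · exact h X hXU hne hX

theorem IsMonoDom.exists_forall_not_rel {r : V → V → Prop} [IsTournament_s11 r] {k : ℕ} (hk : 2 ≤ k)
    (hr : IsMinimalDominatingOn r k univ) {j : Color} {U : Set V}
    (h : IsMonoDom (coloringOfRel r) (k + 1) j U) : ∃ w, ∀ u ∈ U, ¬ r u w := by
  obtain rfl | ⟨v, hv⟩ := U.eq_empty_or_nonempty
  · exact ⟨hr.isDominatingOn.nonempty.some, by simp⟩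
  have hU := h.isDominatingOn ⟨v, hv⟩
  cases j with
  | red =>
    simp only [coloringOfRel_eq_red_iff] at hU
    have hmin : Minimal (IsDominatingOn r k) univ :=
      hr.minimal.mono (fun _ => Or.inl) hr.isDominatingOn
    exact exists_forall_not_rel_of_minimal hk hmin hU
  | blue =>
    simp only [coloringOfRel_eq_blue_iff] at hU
    have hUv : IsDominatingOn (swap r) k (U \ {v}) := hU.sdiff_singleton (r := swap r) hv
    exact absurd rfl (hr.minimal.le_of_le (Or.inr hUv) (subset_univ _) (mem_univ v)).2

end Coloring

/-- Corollary (f(1,d) = d for d ≥ 3, lower bound): for every `d ≥ 3` there is a finite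
2-colored complete digraph with all loops red and no pair of distinct vertices joined
by blue edges in both directions, which cannot be covered by fewer than `d`
monochromatic `d`-dominating subgraphs. -/
theorem f_one_d_lower_bound (d : ℕ) (hd : 3 ≤ d) :
    ∃ (V : Type) (_ : Fintype V) (c : V → V → Color),
      (∀ v : V, c v v = Color.red) ∧
      (∀ u v : V, u ≠ v → ¬(c u v = Color.blue ∧ c v u = Color.blue)) ∧
      ∀ (t : ℕ) (U : Fin t → Set V) (j : Fin t → Color),
        (⋃ i, U i) = Set.univ → (∀ i, IsMonoDom c d (j i) (U i)) → d ≤ t := by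
  obtain ⟨k, rfl⟩ : ∃ k, d = k + 1 := ⟨d - 1, by lia⟩
  obtain ⟨V, _, r, _, hr⟩ := exists_isTournament_isMinimalDominatingOn_univ k
  refine ⟨V, ‹_›, coloringOfRel r, fun v => ?_, fun u v _ => ?_, fun t U j hcov hU => ?_⟩
  · exact coloringOfRel_eq_red_iff.2 (Std.Irrefl.irrefl v)
  · simpa only [coloringOfRel_eq_blue_iff, not_and] using Std.Asymm.asymm u v
  · have hsink (i : Fin t) : ∃ w, ∀ u ∈ U i, ¬ r u w :=
      (hU i).exists_forall_not_rel (by lia) hr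
    simpa using hr.isDominatingOn.lt_card_of_iUnion_eq_univ hcov hsink
end

section
/- Let d ≥ 2 be an integer and let T = (V,E) be a critical d-dominating tournament. Then for every v ∈ V there exists W ⊆ V \ {v} with |W| = d such that v is the unique vertex u ∈ V with (w,u) ∈ E for all w ∈ W (i.e., W dominates v and no other vertex). -/
/-- `E` is a tournament on `V`: loopless, and for all distinct `x,y` exactly one of
`(x,y)`, `(y,x)` is an edge. -/
def IsTournament {V : Type*} (E : V → V → Prop) : Prop :=
  (∀ x : V, ¬ E x x) ∧ ∀ x y : V, x ≠ y → (E x y ↔ ¬ E y x)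

/-- The restriction of the digraph `E` to `U` is `d`-dominating: every finite `S ⊆ U`
with `1 ≤ |S| ≤ d` has a common out-neighbor in `U`. -/
def DomOn {V : Type*} (E : V → V → Prop) (d : ℕ) (U : Set V) : Prop :=
  ∀ S : Finset V, ↑S ⊆ U → S.Nonempty → S.card ≤ d → ∃ w ∈ U, ∀ s ∈ S, E s w

/-!
Delete a vertex `v` whose removal destroys `d`-domination. Some set `W` of at most `d` other
vertices then has lost all its common out-neighbors, so `v` was its only one. Were `|W| < d`, the
set `W ∪ {v}` would still have a common out-neighbor; the only candidate is `v`, which has no loop.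
-/

/-- The common out-neighbors in `U` of the vertices of `W`, where `W` need not be contained in `U`;
for `W = ∅` this is all of `U`. -/
def commonOutNeighbors {V : Type*} (E : V → V → Prop) (U : Set V) (W : Finset V) :
    Set V :=
  {u ∈ U | ∀ w ∈ W, E w u}

section

variable {V : Type*} {E : V → V → Prop} {d : ℕ} {U : Set V} {v : V} {W : Finset V}

theorem DomOn.sdiff_singleton_nonempty (hdom : DomOn E d U) (hd : 1 ≤ d) (hvU : v ∈ U)
    (hv : ¬ E v v) : (U \ {v}).Nonempty := by
  obtain ⟨x, hxU, hx⟩ := hdom {v} (by simpa using hvU) (Finset.singleton_nonempty v)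
    (by simpa using hd)
  have hvx : E v x := hx v (Finset.mem_singleton_self v)
  exact ⟨x, hxU, fun hxv : x = v => hv (hxv ▸ hvx)⟩

theorem DomOn.exists_commonOutNeighbors_eq_singleton (hdom : DomOn E d U)
    (hdel : ¬ DomOn E d (U \ {v})) :
    ∃ W : Finset V, ↑W ⊆ U \ {v} ∧ W.card ≤ d ∧ commonOutNeighbors E U W = {v} := by
  unfold DomOn at hdel
  push Not at hdel
  obtain ⟨W, hWU, hne, hcard, hW⟩ := hdel
  have hnonempty : (commonOutNeighbors E U W).Nonempty :=
    hdom W (hWU.trans Set.sdiff_subset) hne hcard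
  have hsub : commonOutNeighbors E U W ⊆ {v} := by
    rintro u ⟨huU, hu⟩
    by_contra huv
    obtain ⟨w, hw, hwu⟩ := hW u ⟨huU, huv⟩
    exact hwu (hu w hw)
  exact ⟨W, hWU, hcard, hnonempty.subset_singleton_iff.mp hsub⟩

theorem DomOn.le_card_of_commonOutNeighbors_eq_singleton (hdom : DomOn E d U) (hv : ¬ E v v)
    (hWU : ↑W ⊆ U) (hW : commonOutNeighbors E U W = {v}) : d ≤ W.card := by
  classical
  by_contra! hlt
  have hvU : v ∈ U := (hW.ge rfl).1
  obtain ⟨u, huU, hu⟩ := hdom (insert v W) (by simpa using Set.insert_subset hvU hWU)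
    (Finset.insert_nonempty v W) ((Finset.card_insert_le v W).trans hlt)
  obtain ⟨hvu, hWu⟩ := (Finset.forall_mem_insert _ _ _).mp hu
  have huv : u = v := hW.le ⟨huU, hWu⟩
  exact hv (huv ▸ hvu)

theorem critical_unique_dominated_general (hv : ¬ E v v) (hdom : DomOn E d U)
    (hdel : ¬ DomOn E d (U \ {v})) :
    ∃ W : Finset V, ↑W ⊆ U \ {v} ∧ W.card = d ∧ commonOutNeighbors E U W = {v} := by
  obtain ⟨W, hWU, hcard, hW⟩ := hdom.exists_commonOutNeighbors_eq_singleton hdel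
  have hle := hdom.le_card_of_commonOutNeighbors_eq_singleton hv (hWU.trans Set.sdiff_subset) hW
  exact ⟨W, hWU, hcard.antisymm hle, hW⟩

end

/-- Lemma: if `T` is a critical `d`-dominating tournament, then every vertex `v` is,
for some set `W ⊆ V \ {v}` of `d` vertices, the unique vertex dominated by `W`. -/
theorem critical_unique_dominated {V : Type*} (d : ℕ) (hd : 2 ≤ d)
    (E : V → V → Prop) (hT : IsTournament E)
    (hdom : DomOn E d (Set.univ : Set V))
    (hcrit : ∀ U : Set V, U.Nonempty → U ≠ Set.univ → ¬ DomOn E d U) :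
    ∀ v : V, ∃ W : Finset V, v ∉ W ∧ W.card = d ∧
      (∀ w ∈ W, E w v) ∧ (∀ u : V, (∀ w ∈ W, E w u) → u = v) := by
  intro v
  have hne := hdom.sdiff_singleton_nonempty (one_le_two.trans hd) (Set.mem_univ v) (hT.1 v)
  obtain ⟨W, hWv, hcard, hW⟩ :=
    critical_unique_dominated_general (hT.1 v) hdom (hcrit _ hne (by simp))
  exact ⟨W, fun hv => (hWv hv).2 rfl, hcard, (hW.ge rfl).2, fun u hu => hW.le ⟨Set.mem_univ u, hu⟩⟩
end

section
/- Let d ≥ 2 be an integer and let T = (V,E) be a critical d-dominating tournament. Then T* (the digraph obtained from T by adding a loop at every vertex) cannot be covered by fewer than d + 1 (d+1)-dominating subgraphs: there do not exist t ≤ d sets U_1,…,U_t ⊆ V with U_1 ∪ … ∪ U_t = V such that for each i the restriction of T* to U_i is (d+1)-dominating. -/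
/-- `T*`: the digraph obtained from `E` by adding a loop at every vertex. -/
def WithLoops {V : Type*} (E : V → V → Prop) : V → V → Prop :=
  fun x y => E x y ∨ x = y

/-!
Suppose `T*` is covered by at most `d` sets inducing `(d + 1)`-dominating subgraphs. If each of
these sets `U` came with a vertex having no out-neighbour in `U`, then those at most `d` vertices
would have no common out-neighbour at all. So into some `U` every vertex sends an edge. Together
with the `(d + 1)`-domination of `T*` on `U` this makes `T` itself `d`-dominating on `U`, hence
`U = V` by criticality. It remains to see that `T*` is not `(d + 1)`-dominating: by criticality a
vertex `v` is the only common out-neighbour of some set `S` of at most `d` vertices. If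
`x` is an out-neighbour of `v`, then `x` sends no edge to `v`, so `S ∪ {x}` can only be dominated
in `T*` by a sink of `S`. There is at most one such sink, and every out-neighbour of `v` sends an
edge to it, so the sink and `v` have no common out-neighbour.
-/

section

variable {V : Type*} {E : V → V → Prop} {d : ℕ} {U : Set V}

theorem IsTournament.asymm (hT : IsTournament E) : Std.Asymm E where
  asymm x y hxy := (hT.2 x y fun h => hT.1 y (h ▸ hxy)).1 hxy

theorem WithLoops.not_edge_swap [Std.Asymm E] {x y : V} (h : WithLoops E x y) : ¬ E y x := by
  rcases h with h | rfl
  · exact asymm h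
  · exact irrefl x

theorem WithLoops.antisymm [Std.Asymm E] {x y : V} (hxy : WithLoops E x y)
    (hyx : WithLoops E y x) : x = y :=
  hxy.resolve_left hyx.not_edge_swap

theorem WithLoops.forall_edge_of_notMem {S : Finset V} {w : V} (h : ∀ s ∈ S, WithLoops E s w)
    (hw : w ∉ S) : ∀ s ∈ S, E s w :=
  fun s hs => (h s hs).resolve_right fun hsw => hw (hsw ▸ hs)

theorem DomOn.exists_edge_and_forall_edge (h : DomOn E (d + 1) U) {S : Finset V}
    (hSU : ↑S ⊆ U) (hSd : S.card ≤ d) {x : V} (hx : x ∈ U) :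
    ∃ w ∈ U, E x w ∧ ∀ s ∈ S, E s w := by
  classical
  obtain ⟨w, hwU, hw⟩ := h (insert x S)
    (by rw [Finset.coe_insert]; exact Set.insert_subset hx hSU) (S.insert_nonempty x)
    ((S.card_insert_le x).trans (Nat.succ_le_succ hSd))
  exact ⟨w, hwU, (Finset.forall_mem_insert ..).1 hw⟩

theorem DomOn.exists_edge_pair (h : DomOn E d U) (hd : 2 ≤ d) {x y : V} (hx : x ∈ U)
    (hy : y ∈ U) : ∃ w ∈ U, E x w ∧ E y w := by
  classical
  obtain ⟨w, hwU, hw⟩ := h {x, y} (by simp [Set.insert_subset_iff, hx, hy]) (by simp)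
    (Finset.card_le_two.trans hd)
  exact ⟨w, hwU, hw x (by simp), hw y (by simp)⟩

theorem DomOn.of_withLoops [Std.Asymm E] (hU : DomOn (WithLoops E) (d + 1) U)
    (hout : ∀ w ∈ U, ∃ u ∈ U, E w u) : DomOn E d U := by
  intro S hSU hS hSd
  obtain ⟨w, hwU, hw⟩ := hU S hSU hS (hSd.trans d.le_succ)
  by_cases hwS : w ∈ S
  · obtain ⟨u, huU, hwu⟩ := hout w hwU
    obtain ⟨z, hzU, huz, hz⟩ := hU.exists_edge_and_forall_edge hSU hSd huU
    have hwz : E w z := (hz w hwS).resolve_right fun h => (h ▸ huz).not_edge_swap hwu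
    have hzS : z ∉ S := fun hzS => (hw z hzS).not_edge_swap hwz
    exact ⟨z, hzU, WithLoops.forall_edge_of_notMem hz hzS⟩
  · exact ⟨w, hwU, WithLoops.forall_edge_of_notMem hw hwS⟩

theorem exists_finset_eq_of_forall_edge {v : V} (hv : ¬ DomOn E d (U \ {v})) :
    ∃ S : Finset V, ↑S ⊆ U ∧ S.card ≤ d ∧ ∀ w ∈ U, (∀ s ∈ S, E s w) → w = v := by
  simp only [DomOn, not_forall, not_exists, not_and] at hv
  obtain ⟨S, hSU, -, hSd, hS⟩ := hv
  refine ⟨S, hSU.trans Set.sdiff_subset, hSd, fun w hwU hw => ?_⟩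
  by_contra hwv
  obtain ⟨s, hs, hsw⟩ := hS w ⟨hwU, hwv⟩
  exact hsw (hw s hs)

theorem DomOn.not_withLoops [Std.Asymm E] (hU : DomOn E d U) (hd : 2 ≤ d) {v : V}
    (hvU : v ∈ U) (hv : ¬ DomOn E d (U \ {v})) : ¬ DomOn (WithLoops E) (d + 1) U := by
  intro hloops
  obtain ⟨S, hSU, hSd, hSv⟩ := exists_finset_eq_of_forall_edge hv
  have exists_sink {x : V} (hxU : x ∈ U) (hvx : E v x) :
      ∃ w ∈ S, WithLoops E x w ∧ ∀ s ∈ S, WithLoops E s w := by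
    obtain ⟨w, hwU, hxw, hw⟩ := hloops.exists_edge_and_forall_edge hSU hSd hxU
    refine ⟨w, ?_, hxw, hw⟩
    by_contra hwS
    obtain rfl : w = v := hSv w hwU (WithLoops.forall_edge_of_notMem hw hwS)
    exact hxw.not_edge_swap hvx
  obtain ⟨x, hxU, hvx, -⟩ := hU.exists_edge_pair hd hvU hvU
  obtain ⟨w, hwS, -, hw⟩ := exists_sink hxU hvx
  obtain ⟨y, hyU, hvy, hwy⟩ := hU.exists_edge_pair hd hvU (hSU hwS)
  obtain ⟨w', hwS', hyw', hw'⟩ := exists_sink hyU hvy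
  obtain rfl : w' = w := (hw w' hwS').antisymm (hw' w hwS)
  exact hyw'.not_edge_swap hwy

theorem DomOn.exists_forall_exists_edge_of_iUnion_eq_univ [Nonempty V] {ι : Type*} [Fintype ι]
    (h : DomOn E d Set.univ) (hι : Fintype.card ι ≤ d) {U : ι → Set V}
    (hcov : ⋃ i, U i = Set.univ) : ∃ i, ∀ w, ∃ u ∈ U i, E w u := by
  classical
  by_contra! hnot
  choose f hf using hnot
  have mem_cover (v : V) : ∃ i, v ∈ U i := Set.iUnion_eq_univ_iff.1 hcov v
  have : Nonempty ι := (mem_cover (Classical.arbitrary V)).nonempty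
  obtain ⟨v, -, hv⟩ := h (Finset.univ.image f) (Set.subset_univ _)
    (Finset.univ_nonempty.image f) (Finset.card_image_le.trans hι)
  obtain ⟨i, hi⟩ := mem_cover v
  exact hf i v hi (hv (f i) (Finset.mem_image_of_mem f (Finset.mem_univ i)))

end

theorem star_cover_lower_bound_general {V ι : Type*} [Nonempty V] [Fintype ι] {d : ℕ}
    (hd : 2 ≤ d) (hι : Fintype.card ι ≤ d) {E : V → V → Prop} [Std.Asymm E]
    (hdom : DomOn E d (Set.univ : Set V))
    (hcrit : ∀ U : Set V, U.Nonempty → U ≠ Set.univ → ¬ DomOn E d U)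
    {U : ι → Set V} (hcov : ⋃ i, U i = Set.univ) :
    ¬ ∀ i, DomOn (WithLoops E) (d + 1) (U i) := by
  intro hloops
  obtain ⟨i, hi⟩ := hdom.exists_forall_exists_edge_of_iUnion_eq_univ hι hcov
  have v : V := Classical.arbitrary V
  obtain ⟨u, huU, hvu⟩ := hi v
  have hU : U i = Set.univ := by
    by_contra hne
    exact hcrit (U i) ⟨u, huU⟩ hne ((hloops i).of_withLoops fun w _ => hi w)
  have hv : ¬ DomOn E d (Set.univ \ {v}) :=
    hcrit _ ⟨u, Set.mem_univ u, (ne_of_irrefl hvu).symm⟩ fun h =>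
      (h.ge (Set.mem_univ v)).2 rfl
  exact hdom.not_withLoops hd (Set.mem_univ v) hv (hU ▸ hloops i)

/-- Lemma: if `T` is a critical `d`-dominating tournament, then `T*` cannot be covered
by fewer than `d+1` `(d+1)`-dominating subgraphs: there are no `t ≤ d` sets
`U_1, …, U_t` covering `V` whose restrictions of `T*` are all `(d+1)`-dominating. -/
theorem star_cover_lower_bound {V : Type*} [Nonempty V] (d : ℕ) (hd : 2 ≤ d)
    (E : V → V → Prop) (hT : IsTournament E)
    (hdom : DomOn E d (Set.univ : Set V))
    (hcrit : ∀ U : Set V, U.Nonempty → U ≠ Set.univ → ¬ DomOn E d U) :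
    ∀ (t : ℕ) (U : Fin t → Set V), t ≤ d → (⋃ i, U i) = Set.univ →
      ¬ (∀ i, DomOn (WithLoops E) (d + 1) (U i)) := by
  have := hT.asymm
  exact fun t U ht hcov => star_cover_lower_bound_general hd (by simpa using ht) hdom hcrit hcov
end
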